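/- For all (s,x̄) ∈ I × U one has [∂/∂s(x(s,t(s,x̄))), ∂/∂s(c(s,t(s,x̄)))] = −(1 + t_s(s,x̄)²)·δ(s,t(s,x̄)). -/

import Mathlib

noncomputable section

/-- `det2 u v` is the determinant of the 2×2 matrix with columns `u` and `v`. -/
def det2 (u v : ℝ × ℝ) : ℝ := u.1 * v.2 - u.2 * v.1

/-- Partial derivative with respect to the first coordinate `s`. -/
def pds (f : ℝ × ℝ → ℝ) (p : ℝ × ℝ) : ℝ := fderiv ℝ f p (1, 0)

/-- Partial derivative with respect to the second coordinate `t`. -/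
def pdt (f : ℝ × ℝ → ℝ) (p : ℝ × ℝ) : ℝ := fderiv ℝ f p (0, 1)

/-- The planar map `x = (A, B)`. -/
def xmap (A B : ℝ × ℝ → ℝ) (p : ℝ × ℝ) : ℝ × ℝ := (A p, B p)

/-- The conjugate map `c = (-D, C)`. -/
def cmap (C D : ℝ × ℝ → ℝ) (p : ℝ × ℝ) : ℝ × ℝ := (-D p, C p)

/-- `x_s = (A_s, B_s)`. -/
def xs (A B : ℝ × ℝ → ℝ) (p : ℝ × ℝ) : ℝ × ℝ := (pds A p, pds B p)

/-- `x_t = (A_t, B_t)`. -/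
def xt (A B : ℝ × ℝ → ℝ) (p : ℝ × ℝ) : ℝ × ℝ := (pdt A p, pdt B p)

/-- `δ = A_s B_t - A_t B_s = [x_s, x_t]`. -/
def deltaMap (A B : ℝ × ℝ → ℝ) (p : ℝ × ℝ) : ℝ :=
  pds A p * pdt B p - pdt A p * pds B p

/-!
Along a velocity `v = (a, b)` the map `x` moves by `a x_s + b x_t`, and since the Cauchy–Riemann
equations say `c_t = x_s` and `c_s = -x_t`, the map `c` moves by `b x_s - a x_t`. The bracket of
these two vectors is `-(a² + b²) [x_s, x_t] = -(a² + b²) δ`. The curve `s ↦ (s, t(s, x̄))` has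
velocity `(1, t_s)`.
-/

theorem det2_smul_add_smul_smul_add_smul (u w : ℝ × ℝ) (a b c d : ℝ) :
    det2 (a • u + b • w) (c • u + d • w) = (a * d - b * c) * det2 u w := by
  simp only [det2, Prod.fst_add, Prod.snd_add, Prod.smul_fst, Prod.smul_snd, smul_eq_mul]
  ring

theorem deltaMap_eq_det2 (A B : ℝ × ℝ → ℝ) (p : ℝ × ℝ) :
    deltaMap A B p = det2 (xs A B p) (xt A B p) := by
  simp only [deltaMap, det2, xs, xt, mul_comm]

theorem fderiv_apply_eq_pds_add_pdt (f : ℝ × ℝ → ℝ) (p v : ℝ × ℝ) :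
    fderiv ℝ f p v = v.1 * pds f p + v.2 * pdt f p := by
  have hv : v = v.1 • (1, 0) + v.2 • (0, 1) := by simp
  conv_lhs => rw [hv, map_add, map_smul, map_smul]
  rfl

section Differential

variable {A B C D : ℝ × ℝ → ℝ} {p : ℝ × ℝ}

theorem hasFDerivAt_xmap (hA : DifferentiableAt ℝ A p) (hB : DifferentiableAt ℝ B p) :
    HasFDerivAt (xmap A B) ((fderiv ℝ A p).prod (fderiv ℝ B p)) p :=
  hA.hasFDerivAt.prodMk hB.hasFDerivAt

theorem hasFDerivAt_cmap (hC : DifferentiableAt ℝ C p) (hD : DifferentiableAt ℝ D p) :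
    HasFDerivAt (cmap C D) ((-fderiv ℝ D p).prod (fderiv ℝ C p)) p :=
  hD.hasFDerivAt.neg.prodMk hC.hasFDerivAt

theorem fderiv_xmap_apply (hA : DifferentiableAt ℝ A p) (hB : DifferentiableAt ℝ B p)
    (v : ℝ × ℝ) :
    fderiv ℝ (xmap A B) p v = v.1 • xs A B p + v.2 • xt A B p := by
  rw [(hasFDerivAt_xmap hA hB).fderiv]
  ext <;> simp [fderiv_apply_eq_pds_add_pdt, xs, xt]

theorem fderiv_cmap_apply_of_cauchyRiemann
    (hC : DifferentiableAt ℝ C p) (hD : DifferentiableAt ℝ D p)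
    (hAD : pds A p = -pdt D p) (hAD' : pdt A p = pds D p)
    (hBC : pds B p = pdt C p) (hBC' : pdt B p = -pds C p) (v : ℝ × ℝ) :
    fderiv ℝ (cmap C D) p v = v.2 • xs A B p - v.1 • xt A B p := by
  rw [(hasFDerivAt_cmap hC hD).fderiv]
  ext <;> simp [fderiv_apply_eq_pds_add_pdt, xs, xt, hAD, hAD', hBC, hBC'] <;> ring

theorem det2_fderiv_xmap_fderiv_cmap
    (hA : DifferentiableAt ℝ A p) (hB : DifferentiableAt ℝ B p)
    (hC : DifferentiableAt ℝ C p) (hD : DifferentiableAt ℝ D p)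
    (hAD : pds A p = -pdt D p) (hAD' : pdt A p = pds D p)
    (hBC : pds B p = pdt C p) (hBC' : pdt B p = -pds C p) (v : ℝ × ℝ) :
    det2 (fderiv ℝ (xmap A B) p v) (fderiv ℝ (cmap C D) p v) =
      -(v.1 ^ 2 + v.2 ^ 2) * deltaMap A B p := by
  rw [fderiv_xmap_apply hA hB, fderiv_cmap_apply_of_cauchyRiemann hC hD hAD hAD' hBC hBC',
    sub_eq_add_neg, ← neg_smul, det2_smul_add_smul_smul_add_smul, deltaMap_eq_det2]
  ring

end Differential

theorem bracket_dsx_dsc_general {A B C D : ℝ × ℝ → ℝ} {γ : ℝ → ℝ × ℝ} {v : ℝ × ℝ} {s : ℝ}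
    (hA : DifferentiableAt ℝ A (γ s)) (hB : DifferentiableAt ℝ B (γ s))
    (hC : DifferentiableAt ℝ C (γ s)) (hD : DifferentiableAt ℝ D (γ s))
    (hAD : pds A (γ s) = -pdt D (γ s)) (hAD' : pdt A (γ s) = pds D (γ s))
    (hBC : pds B (γ s) = pdt C (γ s)) (hBC' : pdt B (γ s) = -pds C (γ s))
    (hγ : HasDerivAt γ v s) :
    det2 (deriv (fun s' => xmap A B (γ s')) s) (deriv (fun s' => cmap C D (γ s')) s) =
      -(v.1 ^ 2 + v.2 ^ 2) * deltaMap A B (γ s) := by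
  have hx : deriv (fun s' => xmap A B (γ s')) s = fderiv ℝ (xmap A B) (γ s) v :=
    ((hasFDerivAt_xmap hA hB).differentiableAt.hasFDerivAt.comp_hasDerivAt s hγ).deriv
  have hc : deriv (fun s' => cmap C D (γ s')) s = fderiv ℝ (cmap C D) (γ s) v :=
    ((hasFDerivAt_cmap hC hD).differentiableAt.hasFDerivAt.comp_hasDerivAt s hγ).deriv
  rw [hx, hc, det2_fderiv_xmap_fderiv_cmap hA hB hC hD hAD hAD' hBC hBC']

theorem bracket_dsx_dsc
    (Ω : Set (ℝ × ℝ)) (hΩ : IsOpen Ω)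
    (A B C D : ℝ × ℝ → ℝ)
    (hA : ContDiffOn ℝ (⊤ : ℕ∞) A Ω) (hB : ContDiffOn ℝ (⊤ : ℕ∞) B Ω)
    (hC : ContDiffOn ℝ (⊤ : ℕ∞) C Ω) (hD : ContDiffOn ℝ (⊤ : ℕ∞) D Ω)
    (hCR1 : ∀ p ∈ Ω, pds A p = - pdt D p)
    (hCR2 : ∀ p ∈ Ω, pdt A p = pds D p)
    (hCR3 : ∀ p ∈ Ω, pds B p = pdt C p)
    (hCR4 : ∀ p ∈ Ω, pdt B p = - pds C p)
    (s₀ t₀ : ℝ) (hst₀ : (s₀, t₀) ∈ Ω)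
    (hne₀ : det2 (xt A B (s₀, t₀)) (cmap C D (s₀, t₀)) ≠ 0)
    (I : Set ℝ) (U : Set (ℝ × ℝ)) (hI : IsOpen I) (hU : IsOpen U)
    (hs₀ : s₀ ∈ I) (hx₀ : xmap A B (s₀, t₀) ∈ U)
    (T : ℝ → ℝ × ℝ → ℝ)
    (hT : ContDiffOn ℝ (⊤ : ℕ∞) (fun q : ℝ × (ℝ × ℝ) => T q.1 q.2) (I ×ˢ U))
    (hT₀ : T s₀ (xmap A B (s₀, t₀)) = t₀)
    (hTmem : ∀ s ∈ I, ∀ xb ∈ U, (s, T s xb) ∈ Ω)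
    (hTeq : ∀ s ∈ I, ∀ xb ∈ U,
      det2 (xb - xmap A B (s, T s xb)) (cmap C D (s, T s xb)) = 0)
    :
    ∀ s ∈ I, ∀ xb ∈ U,
      det2 (deriv (fun s' => xmap A B (s', T s' xb)) s)
          (deriv (fun s' => cmap C D (s', T s' xb)) s)
        = -(1 + (deriv (fun s' => T s' xb) s) ^ 2) * deltaMap A B (s, T s xb) := by
  intro s hs xb hxb
  have hp : (s, T s xb) ∈ Ω := hTmem s hs xb hxb
  have diffAt {F : ℝ × ℝ → ℝ} (hF : ContDiffOn ℝ (⊤ : ℕ∞) F Ω) :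
      DifferentiableAt ℝ F (s, T s xb) :=
    (hF.differentiableOn (by simp)).differentiableAt (hΩ.mem_nhds hp)
  have hT' : DifferentiableAt ℝ (fun q : ℝ × (ℝ × ℝ) => T q.1 q.2) (s, xb) :=
    (hT.differentiableOn (by simp)).differentiableAt ((hI.prod hU).mem_nhds ⟨hs, hxb⟩)
  have hTs : DifferentiableAt ℝ (fun s' => T s' xb) s :=
    hT'.comp s (f := fun s' => (s', xb)) (by fun_prop)
  simpa only [one_pow] using
    bracket_dsx_dsc_general (γ := fun s' => (s', T s' xb))
      (diffAt hA) (diffAt hB) (diffAt hC) (diffAt hD)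
      (hCR1 _ hp) (hCR2 _ hp) (hCR3 _ hp) (hCR4 _ hp) ((hasDerivAt_id s).prodMk hTs.hasDerivAt)
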